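/- There is a constant C, depending only on d and the fixed auxiliary functions, such that for all integers n ≥ 1, all unit vectors ν ∈ ℝ^d, all k ∈ ℤ, and every g ∈ L¹(ℝ^d), ‖Λ_k (I − 𝔖_{n,ν}) g‖_{L¹} ≤ C·‖g‖_{L¹}. -/

import Mathlib

/-!
The multiplier of `Λ_k (I - 𝔖_{n,ν})` is `β₀(2^k ξ) - Ψ(2^k (r⟨ν, ξ⟩, ξ))`, where
`r = 2^{nγ} n^{-5}`, `β₀ = φ - φ(2 ⬝)` and `Ψ(u, ξ) = φ₀(u / |ξ|) β₀(ξ)` is a test function on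
`ℝ × ℝ^d`, since `β₀` is supported in an annulus. All parameters thus enter through injective
linear maps, and it suffices to bound `‖𝓕⁻(Ψ ∘ T)‖_{L¹}` uniformly over all injective linear `T`,
for a fixed Schwartz function `Ψ`. Write `T = U ∘ B` with `U` an isometry and `B` invertible:
composing with `B` does not change the `L¹` norm of the inverse Fourier transform, and the
functions `Ψ ∘ U` form a bounded subset of the Schwartz space, on which `f ↦ 𝓕⁻ f` is continuous
into `L¹`. Young's inequality concludes.
-/

open MeasureTheory Filter Metric
open scoped ENNReal FourierTransform RealInnerProductSpace Topology

noncomputable section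

/-- Euclidean space `ℝ^d`. -/
abbrev Eu (d : ℕ) : Type := EuclideanSpace ℝ (Fin d)

/-- The parameter `γ = 1/2`. -/
def gam : ℝ := 1/2

/-- `ℓ(n) = ⌊2 log₂ n⌋ + 2`. -/
def elln (n : ℕ) : ℤ := ⌊2 * Real.logb 2 n⌋ + 2

/-- `ℓ_ε(n) = ⌊2 ε⁻¹ log₂ n⌋ + 2`. -/
def ellEps (ε : ℝ) (n : ℕ) : ℤ := ⌊2 * ε⁻¹ * Real.logb 2 n⌋ + 2

/-- `n(ε) = 10^10 d ε⁻¹ log₂(2 ε⁻¹)`. -/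
def nEps (d : ℕ) (ε : ℝ) : ℝ := 10 ^ 10 * d * ε⁻¹ * Real.logb 2 (2 * ε⁻¹)

variable {d : ℕ}

/-- `∫₀¹ a(sx + (1-s)y) ds`. -/
def avg01 (a : Eu d → ℝ) (x y : Eu d) : ℝ := ∫ s in (0:ℝ)..1, a (s • x + (1 - s) • y)

/-- `∫ ϑ(s) a(sx + (1-s)y) ds`. -/
def avgTh (ϑ : ℝ → ℝ) (a : Eu d → ℝ) (x y : Eu d) : ℝ :=
  ∫ s : ℝ, ϑ s * a (s • x + (1 - s) • y)

/-- The dyadic piece `K_j(x) = (φ(2^{-j}x) - φ(2^{-j+1}x)) K(x)`. -/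
def Kdyad (K φ : Eu d → ℝ) (j : ℤ) (x : Eu d) : ℝ :=
  (φ ((2:ℝ) ^ (-j) • x) - φ ((2:ℝ) ^ (-j+1) • x)) * K x

/-- `Φ_m(x) = 2^{-md} Φ(2^{-m} x)`. -/
def PhiM (Φ : Eu d → ℝ) (m : ℤ) (x : Eu d) : ℝ :=
  (2:ℝ) ^ (-(m * (d:ℤ))) * Φ ((2:ℝ) ^ (-m) • x)

/-- `K_j^n = K_j * Φ_{j - ℓ_ε(n)}`. -/
def Kjn (K φ Φ : Eu d → ℝ) (ε : ℝ) (n : ℕ) (j : ℤ) (x : Eu d) : ℝ :=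
  ∫ y, Kdyad K φ j (x - y) * PhiM Φ (j - ellEps ε n) y

/-- The operator `T_j` with kernel `K_j(x-y) ∫₀¹ a(sx+(1-s)y) ds`. -/
def TopJ (K φ a : Eu d → ℝ) (j : ℤ) (g : Eu d → ℂ) (x : Eu d) : ℂ :=
  ∫ y, ((Kdyad K φ j (x - y) * avg01 a x y : ℝ) : ℂ) * g y

/-- The operator `T_j^n` with kernel `K_j^n(x-y) ∫ ϑ_n(s) a(sx+(1-s)y) ds`. -/
def Tnop (K φ Φ a : Eu d → ℝ) (ε : ℝ) (ϑn : ℝ → ℝ) (n : ℕ) (j : ℤ) (g : Eu d → ℂ)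
    (x : Eu d) : ℂ :=
  ∫ y, ((Kjn K φ Φ ε n j (x - y) * avgTh ϑn a x y : ℝ) : ℂ) * g y

/-- The operator `T_j^{n,ν}` with kernel `K_j^{n,ν}(x-y) ∫ ϑ_n(s) a(sx+(1-s)y) ds`,
where `K_j^{n,ν} = K_j^n ⋅ χ` (with `χ = χ_{n,ν}`). -/
def Tnnu (K φ Φ a : Eu d → ℝ) (χv : Eu d → ℝ) (ε : ℝ) (ϑn : ℝ → ℝ) (n : ℕ) (j : ℤ)
    (g : Eu d → ℂ) (x : Eu d) : ℂ :=
  ∫ y, ((Kjn K φ Φ ε n j (x - y) * χv (x - y) * avgTh ϑn a x y : ℝ) : ℂ) * g y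

/-- `𝒦_{j,y}^{n,ν}[g](x) = K_j^{n,ν}(x-y) ∫ ϑ_n(s) g(sx+(1-s)y) ds` (with `χv = χ_{n,ν}`). -/
def Kcal (K φ Φ : Eu d → ℝ) (χv : Eu d → ℝ) (ε : ℝ) (ϑn : ℝ → ℝ) (n : ℕ) (j : ℤ)
    (y : Eu d) (g : Eu d → ℂ) (x : Eu d) : ℂ :=
  ((Kjn K φ Φ ε n j (x - y) * χv (x - y) : ℝ) : ℂ) *
    ∫ s : ℝ, (ϑn s : ℂ) * g (s • x + (1 - s) • y)

/-- `P_m`, convolution with `Φ_m`. -/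
def Pop (Φ : Eu d → ℝ) (m : ℤ) (g : Eu d → ℂ) (x : Eu d) : ℂ :=
  ∫ y, ((PhiM Φ m (x - y) : ℝ) : ℂ) * g y

/-- The (closed) cube with center `c` and sidelength `2^l`. -/
def cube (c : Eu d) (l : ℤ) : Set (Eu d) := {y | ∀ k, |y k - c k| ≤ (2:ℝ) ^ (l - 1)}

/-- `B_m = Σ_{Q : L(Q) = m} b_Q`. -/
def Bfun {ι : Type} (Lq : ι → ℤ) (b : ι → Eu d → ℂ) (m : ℤ) (x : Eu d) : ℂ :=
  ∑' i : {i : ι // Lq i = m}, b i x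

/-- The Fourier multiplier operator with multiplier `β_k(ξ) m(ξ)`,
`β_k(ξ) = φ(2^k ξ) - φ(2^{k+1} ξ)`, realized as convolution with the Schwartz kernel
`𝓕⁻[β_k ⋅ m]`. -/
def LamM (φ : Eu d → ℝ) (mf : Eu d → ℝ) (k : ℤ) (g : Eu d → ℂ) (x : Eu d) : ℂ :=
  ∫ y, 𝓕⁻ (fun ξ : Eu d =>
      (((φ ((2:ℝ) ^ k • ξ) - φ ((2:ℝ) ^ (k+1) • ξ)) * mf ξ : ℝ) : ℂ)) (x - y) * g y

/-- The Littlewood–Paley operator `Λ_k`, Fourier multiplier `β_k`. -/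
def Lam (φ : Eu d → ℝ) (k : ℤ) (g : Eu d → ℂ) (x : Eu d) : ℂ :=
  LamM φ (fun _ => 1) k g x

/-- `V_k`, the Fourier multiplier operator with multiplier `φ(2^k ξ)`, realized as
convolution with `𝓕⁻[φ(2^k ⬝)]`. -/
def Vop (φ : Eu d → ℝ) (k : ℤ) (g : Eu d → ℂ) (x : Eu d) : ℂ :=
  ∫ y, 𝓕⁻ (fun ξ : Eu d => ((φ ((2:ℝ) ^ k • ξ) : ℝ) : ℂ)) (x - y) * g y

/-- The multiplier `ξ ↦ φ₀(r ⟨ν, ξ/|ξ|⟩)`. -/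
def mDir (φ₀ : ℝ → ℝ) (r : ℝ) (ν : Eu d) (ξ : Eu d) : ℝ := φ₀ (r * ⟪ν, ‖ξ‖⁻¹ • ξ⟫)

/-- The tube `τ_i^{n,ν}`. -/
def tubeT (ν : Eu d) (n : ℕ) (i : ℤ) : Set (Eu d) :=
  {x | |⟪x, ν⟫| ≤ (2:ℝ) ^ (i + 2) ∧ ‖x - ⟪x, ν⟫ • ν‖ ≤ (2:ℝ) ^ (((i:ℝ) + 2) - gam * n)}

/-- `H_i^{n,ν} = 2^{-id} 1_{τ_i^{n,ν}}`. -/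
def Hfn (ν : Eu d) (n : ℕ) (i : ℤ) (x : Eu d) : ℝ :=
  Set.indicator (tubeT ν n i) (fun _ => (2:ℝ) ^ (-(i * (d:ℤ)))) x

/-- Convolution of real functions. -/
def convR (f g : Eu d → ℝ) (x : Eu d) : ℝ := ∫ y, f (x - y) * g y

open Function Bornology ContinuousLinearMap
open scoped NNReal SchwartzMap Convolution ContDiff

section Young

variable {𝕜 G E E' F : Type*} [NontriviallyNormedField 𝕜]
  [NormedAddCommGroup E] [NormedSpace 𝕜 E] [NormedAddCommGroup E'] [NormedSpace 𝕜 E']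
  [NormedAddCommGroup F] [NormedSpace 𝕜 F] [NormedSpace ℝ F]
  [AddGroup G] [MeasurableSpace G] [MeasurableAdd₂ G] [MeasurableNeg G]

theorem eLpNorm_one_convolution_le (L : E →L[𝕜] E' →L[𝕜] F) {μ : Measure G} [SFinite μ]
    [μ.IsAddRightInvariant] {f : G → E} {g : G → E'} (hf : AEStronglyMeasurable f μ)
    (hg : AEStronglyMeasurable g μ) :
    eLpNorm (f ⋆[L, μ] g) 1 μ ≤ ‖L‖ₑ * eLpNorm f 1 μ * eLpNorm g 1 μ := by
  have hgsub : AEStronglyMeasurable (fun p : G × G => g (p.1 - p.2)) (μ.prod μ) :=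
    hg.comp_quasiMeasurePreserving (quasiMeasurePreserving_sub_of_right_invariant μ μ)
  simp only [eLpNorm_one_eq_lintegral_enorm]
  calc ∫⁻ x, ‖∫ t, L (f t) (g (x - t)) ∂μ‖ₑ ∂μ
      ≤ ∫⁻ x, ∫⁻ t, ‖L‖ₑ * ‖f t‖ₑ * ‖g (x - t)‖ₑ ∂μ ∂μ :=
        lintegral_mono fun x => (enorm_integral_le_lintegral_enorm _).trans <|
          lintegral_mono fun t => L.le_opENorm₂ (f t) (g (x - t))
    _ = ∫⁻ t, ∫⁻ x, ‖L‖ₑ * ‖f t‖ₑ * ‖g (x - t)‖ₑ ∂μ ∂μ :=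
        lintegral_lintegral_swap ((hf.comp_snd.enorm.const_mul _).mul hgsub.enorm)
    _ = ∫⁻ t, ‖L‖ₑ * ‖f t‖ₑ * ∫⁻ x, ‖g x‖ₑ ∂μ ∂μ := by
        refine lintegral_congr fun t => ?_
        rw [lintegral_const_mul' _ _ (by finiteness),
          lintegral_sub_right_eq_self (fun x => ‖g x‖ₑ) t]
    _ = ‖L‖ₑ * (∫⁻ t, ‖f t‖ₑ ∂μ) * ∫⁻ x, ‖g x‖ₑ ∂μ := by
        rw [lintegral_mul_const'' _ (hf.enorm.const_mul _), lintegral_const_mul'' _ hf.enorm]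

end Young

section LinearChangeOfVariables

variable {E F : Type*} [NormedAddCommGroup E] [NormedSpace ℝ E] [FiniteDimensional ℝ E]
  [MeasurableSpace E] [BorelSpace E] [NormedAddCommGroup F]

theorem measurableEmbedding_of_det_ne_zero {A : E →ₗ[ℝ] E} (hA : LinearMap.det A ≠ 0) :
    MeasurableEmbedding A :=
  (A.equivOfDetNeZero hA).toContinuousLinearEquiv.toHomeomorph.measurableEmbedding

theorem eLpNorm_one_comp_linearMap (μ : Measure E) [μ.IsAddHaarMeasure] {A : E →ₗ[ℝ] E}
    (hA : LinearMap.det A ≠ 0) (f : E → F) :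
    eLpNorm (f ∘ A) 1 μ = ‖(LinearMap.det A)⁻¹‖ₑ * eLpNorm f 1 μ := by
  rw [← (measurableEmbedding_of_det_ne_zero hA).eLpNorm_map_measure,
    Measure.map_linearMap_addHaar_eq_smul_addHaar μ hA, eLpNorm_one_smul_measure,
    Real.enorm_eq_ofReal_abs]

end LinearChangeOfVariables

section FourierInvCompLinearMap

theorem det_adjoint {𝕜 E : Type*} [RCLike 𝕜] [NormedAddCommGroup E] [InnerProductSpace 𝕜 E]
    [FiniteDimensional 𝕜 E] (A : E →ₗ[𝕜] E) :
    LinearMap.det A.adjoint = star (LinearMap.det A) := by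
  let b := stdOrthonormalBasis 𝕜 E
  rw [← LinearMap.det_toMatrix b.toBasis, ← LinearMap.det_toMatrix b.toBasis A,
    LinearMap.toMatrix_adjoint, Matrix.det_conjTranspose]

variable {E F : Type*} [NormedAddCommGroup E] [InnerProductSpace ℝ E] [FiniteDimensional ℝ E]
  [MeasurableSpace E] [BorelSpace E] [NormedAddCommGroup F] [NormedSpace ℂ F]

theorem fourierInv_comp_linearMap_comp_adjoint {A : E →ₗ[ℝ] E} (hA : LinearMap.det A ≠ 0)
    (f : E → F) : 𝓕⁻ (f ∘ A) ∘ A.adjoint = |(LinearMap.det A)⁻¹| • 𝓕⁻ f := by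
  ext x
  calc 𝓕⁻ (f ∘ A) (A.adjoint x) = ∫ ξ, Real.fourierChar ⟪A ξ, x⟫ • f (A ξ) := by
        simp only [Real.fourierInv_eq, LinearMap.adjoint_inner_right, comp_apply]
    _ = ∫ η, Real.fourierChar ⟪η, x⟫ • f η ∂(volume.map A) :=
        ((measurableEmbedding_of_det_ne_zero hA).integral_map
          fun η => Real.fourierChar ⟪η, x⟫ • f η).symm
    _ = |(LinearMap.det A)⁻¹| • 𝓕⁻ f x := by
        rw [Measure.map_linearMap_addHaar_eq_smul_addHaar volume hA, integral_smul_measure,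
          ENNReal.toReal_ofReal (abs_nonneg _), Real.fourierInv_eq]

theorem eLpNorm_one_fourierInv_comp_linearMap {A : E →ₗ[ℝ] E} (hA : LinearMap.det A ≠ 0)
    (f : E → F) : eLpNorm (𝓕⁻ (f ∘ A)) 1 = eLpNorm (𝓕⁻ f) 1 := by
  have hdet : LinearMap.det A.adjoint = LinearMap.det A := by rw [det_adjoint, star_trivial]
  have hc : ‖(LinearMap.det A)⁻¹‖ₑ ≠ 0 := by simpa using hA
  have h := eLpNorm_one_comp_linearMap volume (hdet.trans_ne hA) (𝓕⁻ (f ∘ A))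
  rw [fourierInv_comp_linearMap_comp_adjoint hA, eLpNorm_const_smul, hdet, Real.enorm_abs] at h
  exact ((ENNReal.mul_right_inj hc enorm_ne_top).1 h).symm

end FourierInvCompLinearMap

section SchwartzPullback

variable {E E' F : Type*} [NormedAddCommGroup E] [NormedSpace ℝ E] [FiniteDimensional ℝ E]
  [NormedAddCommGroup E'] [NormedSpace ℝ E'] [NormedAddCommGroup F] [NormedSpace ℝ F]

/-- The Schwartz function `Ψ ∘ T`, where `T` is an injective linear map, not necessarily onto. -/
def schwartzPullback (Ψ : 𝓢(E', F)) (T : E →ₗ[ℝ] E') (hT : Injective T) : 𝓢(E, F) :=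
  SchwartzMap.compCLMOfAntilipschitz ℝ (g := T) T.toContinuousLinearMap.hasTemperateGrowth
    (T.exists_antilipschitzWith (LinearMap.ker_eq_bot.2 hT)).choose_spec.2 Ψ

theorem seminorm_schwartzPullback_linearIsometry_le (Ψ : 𝓢(E', F)) (U : E →ₗᵢ[ℝ] E') (k n : ℕ) :
    SchwartzMap.seminorm ℝ k n (schwartzPullback Ψ U.toLinearMap U.injective) ≤
      SchwartzMap.seminorm ℝ k n Ψ := by
  refine SchwartzMap.seminorm_le_bound ℝ k n _ (apply_nonneg _ _) fun x => ?_
  have hderiv : ‖iteratedFDeriv ℝ n (Ψ ∘ U.toContinuousLinearMap) x‖ ≤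
      ‖iteratedFDeriv ℝ n Ψ (U x)‖ := by
    rw [U.toContinuousLinearMap.iteratedFDeriv_comp_right (Ψ.smooth n) x le_rfl]
    refine (ContinuousMultilinearMap.norm_compContinuousLinearMap_le _ _).trans
      (mul_le_of_le_one_right (norm_nonneg _) ?_)
    exact Finset.prod_le_one (fun _ _ => norm_nonneg _) fun _ _ => U.norm_toContinuousLinearMap_le
  calc ‖x‖ ^ k * ‖iteratedFDeriv ℝ n (Ψ ∘ U.toContinuousLinearMap) x‖
      ≤ ‖U x‖ ^ k * ‖iteratedFDeriv ℝ n Ψ (U x)‖ := by rw [U.norm_map]; gcongr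
    _ ≤ SchwartzMap.seminorm ℝ k n Ψ := SchwartzMap.le_seminorm ℝ k n Ψ (U x)

theorem isVonNBounded_range_schwartzPullback_linearIsometry (Ψ : 𝓢(E', F)) :
    IsVonNBounded ℝ
      (Set.range fun U : E →ₗᵢ[ℝ] E' => schwartzPullback Ψ U.toLinearMap U.injective) := by
  refine (schwartz_withSeminorms ℝ E F).isVonNBounded_iff_seminorm_bounded.2 fun ⟨k, n⟩ => ?_
  refine ⟨SchwartzMap.seminorm ℝ k n Ψ + 1, by positivity, ?_⟩
  rintro _ ⟨U, rfl⟩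
  exact (seminorm_schwartzPullback_linearIsometry_le Ψ U k n).trans_lt (lt_add_one _)

end SchwartzPullback

theorem exists_eLpNorm_le_of_isVonNBounded {E F : Type*} [NormedAddCommGroup E] [NormedSpace ℝ E]
    [MeasurableSpace E] [OpensMeasurableSpace E] [NormedAddCommGroup F] [NormedSpace ℝ F]
    [SecondCountableTopologyEither E F] {S : Set 𝓢(E, F)} (hS : IsVonNBounded ℝ S)
    (p : ℝ≥0∞) [Fact (1 ≤ p)] (μ : Measure E) [μ.HasTemperateGrowth] :
    ∃ C : ℝ≥0, ∀ f ∈ S, eLpNorm f p μ ≤ C := by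
  obtain ⟨C, hC⟩ :=
    (NormedSpace.isVonNBounded_iff' ℝ).1 (hS.image (SchwartzMap.toLpCLM ℝ F p μ))
  refine ⟨C.toNNReal, fun f hf => ?_⟩
  have hf_norm : ‖f.toLp p μ‖ ≤ C := hC _ ⟨f, hf, rfl⟩
  calc eLpNorm f p μ = ‖f.toLp p μ‖ₑ := (Lp.enorm_toLp (f.memLp p μ)).symm
    _ = ENNReal.ofReal ‖f.toLp p μ‖ := (ofReal_norm _).symm
    _ ≤ C.toNNReal := ENNReal.ofReal_le_ofReal hf_norm

theorem exists_linearIsometry_comp_linearEquiv {E E' : Type*} [NormedAddCommGroup E]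
    [InnerProductSpace ℝ E] [FiniteDimensional ℝ E] [NormedAddCommGroup E']
    [InnerProductSpace ℝ E'] {T : E →ₗ[ℝ] E'} (hT : Injective T) :
    ∃ (U : E →ₗᵢ[ℝ] E') (B : E ≃ₗ[ℝ] E), ⇑T = U ∘ B := by
  let e : E ≃ₗ[ℝ] LinearMap.range T := LinearEquiv.ofInjective T hT
  let V : E ≃ₗᵢ[ℝ] LinearMap.range T :=
    (stdOrthonormalBasis ℝ E).equiv (stdOrthonormalBasis ℝ _) (finCongr e.finrank_eq)
  refine ⟨(LinearMap.range T).subtypeₗᵢ.comp V.toLinearIsometry, e.trans V.symm.toLinearEquiv, ?_⟩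
  ext x
  simp [e]

section FourierInvSchwartz

variable {E F : Type*} [NormedAddCommGroup E] [InnerProductSpace ℝ E] [FiniteDimensional ℝ E]
  [MeasurableSpace E] [BorelSpace E] [NormedAddCommGroup F] [NormedSpace ℂ F]

theorem aestronglyMeasurable_fourierInv (f : 𝓢(E, F)) :
    AEStronglyMeasurable (𝓕⁻ (f : E → F)) := by
  rw [← SchwartzMap.fourierInv_coe]
  exact (𝓕⁻ f).continuous.aestronglyMeasurable

theorem eLpNorm_fourierInv_sub_le (f₁ f₂ : 𝓢(E, F)) {p : ℝ≥0∞} (hp : 1 ≤ p) :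
    eLpNorm (𝓕⁻ ⇑(f₁ - f₂)) p ≤ eLpNorm (𝓕⁻ (f₁ : E → F)) p + eLpNorm (𝓕⁻ (f₂ : E → F)) p := by
  have hsub : 𝓕⁻ ⇑(f₁ - f₂) = 𝓕⁻ (f₁ : E → F) - 𝓕⁻ (f₂ : E → F) := by
    have h : 𝓕⁻ (f₁ - f₂) = 𝓕⁻ f₁ - 𝓕⁻ f₂ :=
      map_sub (FourierTransform.fourierInvCLM ℝ 𝓢(E, F)) f₁ f₂
    simpa [SchwartzMap.fourierInv_coe] using congrArg (⇑) h
  rw [hsub]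
  exact eLpNorm_sub_le (aestronglyMeasurable_fourierInv f₁) (aestronglyMeasurable_fourierInv f₂) hp

theorem exists_eLpNorm_one_fourierInv_comp_le {E' : Type*} [NormedAddCommGroup E']
    [InnerProductSpace ℝ E'] (Ψ : 𝓢(E', F)) :
    ∃ C : ℝ≥0, ∀ T : E →ₗ[ℝ] E', Injective T → eLpNorm (𝓕⁻ (Ψ ∘ T)) 1 ≤ C := by
  let 𝓕inv : 𝓢(E, F) →L[ℝ] 𝓢(E, F) := FourierTransform.fourierInvCLM ℝ 𝓢(E, F)
  obtain ⟨C, hC⟩ := exists_eLpNorm_le_of_isVonNBounded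
    ((isVonNBounded_range_schwartzPullback_linearIsometry (E := E) Ψ).image 𝓕inv) 1 volume
  refine ⟨C, fun T hT => ?_⟩
  obtain ⟨U, B, hUB⟩ := exists_linearIsometry_comp_linearEquiv hT
  have hB : eLpNorm (𝓕⁻ ((Ψ ∘ U) ∘ B)) 1 = eLpNorm (𝓕⁻ (Ψ ∘ U)) 1 :=
    eLpNorm_one_fourierInv_comp_linearMap B.isUnit_det'.ne_zero _
  rw [hUB, ← comp_assoc, hB]
  have hU := hC _ ⟨_, ⟨U, rfl⟩, rfl⟩
  rwa [FourierTransform.fourierInvCLM_apply, SchwartzMap.fourierInv_coe] at hU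

end FourierInvSchwartz

section AngularCutoff

variable {E F : Type*} [NormedAddCommGroup E] [InnerProductSpace ℝ E] [NormedAddCommGroup F]
  [NormedSpace ℝ F]

/-- The function `(u, ξ) ↦ φ₀(u / |ξ|) β(ξ)`, whose restrictions to the graphs of the linear forms
`⟨v, ·⟩` are the symbols `β` localized to directions nearly orthogonal to `v`.
The division is only meaningful when `β` vanishes near `0`. -/
def angularCutoff (φ₀ : ℝ → ℝ) (β : E → F) (z : WithLp 2 (ℝ × E)) : F :=
  φ₀ (z.fst / ‖z.snd‖) • β z.snd

variable {φ₀ : ℝ → ℝ} {β : E → F}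

theorem contDiff_angularCutoff {n : ℕ∞} (hφ₀ : ContDiff ℝ n φ₀) (hβ : ContDiff ℝ n β)
    (hβ0 : ∀ᶠ ξ in 𝓝 0, β ξ = 0) : ContDiff ℝ n (angularCutoff φ₀ β) := by
  have hfst : ContDiff ℝ n (WithLp.fst : WithLp 2 (ℝ × E) → ℝ) := (WithLp.fstL 2 ℝ ℝ E).contDiff
  have hsnd : ContDiff ℝ n (WithLp.snd : WithLp 2 (ℝ × E) → E) := (WithLp.sndL 2 ℝ ℝ E).contDiff
  refine contDiff_iff_contDiffAt.2 fun z => ?_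
  by_cases hz : z.snd = 0
  · have hzero : angularCutoff φ₀ β =ᶠ[𝓝 z] fun _ => 0 := by
      have hβz : ∀ᶠ w in 𝓝 z, β w.snd = 0 :=
        hsnd.continuous.continuousAt.eventually (by rwa [hz])
      filter_upwards [hβz] with w hw
      rw [angularCutoff, hw, smul_zero]
    exact contDiffAt_const.congr_of_eventuallyEq hzero
  · have hdiv : ContDiffAt ℝ n (fun w : WithLp 2 (ℝ × E) => w.fst / ‖w.snd‖) z :=
      hfst.contDiffAt.div (hsnd.contDiffAt.norm ℝ hz) (norm_ne_zero_iff.2 hz)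
    exact (hφ₀.contDiffAt.comp z hdiv).smul (hβ.contDiffAt.comp z hsnd.contDiffAt)

theorem hasCompactSupport_angularCutoff [FiniteDimensional ℝ E] (hφ₀ : HasCompactSupport φ₀)
    (hβ : HasCompactSupport β) (hβ0 : β 0 = 0) : HasCompactSupport (angularCutoff φ₀ β) := by
  obtain ⟨ρ, hρ⟩ := hφ₀.isCompact.isBounded.subset_closedBall 0
  obtain ⟨R, hR⟩ := hβ.isCompact.isBounded.subset_closedBall 0
  have hK : IsCompact (WithLp.homeomorphProd 2 ℝ E ⁻¹'
      closedBall 0 (|ρ| * R) ×ˢ closedBall 0 R) :=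
    (WithLp.homeomorphProd 2 ℝ E).isCompact_preimage.2
      ((isCompact_closedBall _ _).prod (isCompact_closedBall _ _))
  refine hK.of_isClosed_subset (isClosed_tsupport _)
    (closure_minimal (fun z hz => ?_) hK.isClosed)
  obtain ⟨hφz, hβz⟩ := smul_ne_zero_iff.1 hz
  have hsnd : ‖z.snd‖ ≤ R := mem_closedBall_zero_iff.1 (hR (subset_tsupport _ hβz))
  have hsnd0 : 0 < ‖z.snd‖ := norm_pos_iff.2 fun h => hβz (by rw [h, hβ0])
  have hquot : |z.fst / ‖z.snd‖| ≤ ρ := mem_closedBall_zero_iff.1 (hρ (subset_tsupport _ hφz))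
  have hfst : |z.fst| ≤ |ρ| * R := by
    rw [abs_div, abs_norm, div_le_iff₀ hsnd0] at hquot
    exact hquot.trans (by gcongr; exact le_abs_self ρ)
  exact ⟨mem_closedBall_zero_iff.2 hfst, mem_closedBall_zero_iff.2 hsnd⟩

/-- The parametrization `ξ ↦ (⟨v, ξ⟩, ξ)` of the graph of the linear form `⟨v, ·⟩`. -/
def graphMap (v : E) : E →ₗ[ℝ] WithLp 2 (ℝ × E) :=
  (WithLp.linearEquiv 2 ℝ (ℝ × E)).symm ∘ₗ (innerₗ E v).prod LinearMap.id

@[simp]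
theorem fst_graphMap (v ξ : E) : (graphMap v ξ).fst = ⟪v, ξ⟫ := rfl

@[simp]
theorem snd_graphMap (v ξ : E) : (graphMap v ξ).snd = ξ := rfl

theorem injective_smul_graphMap {t : ℝ} (ht : t ≠ 0) (v : E) : Injective (t • graphMap v) := by
  intro ξ η h
  simpa [ht] using congrArg WithLp.snd h

theorem angularCutoff_smul_graphMap {t : ℝ} (ht : 0 < t) (v ξ : E) :
    angularCutoff φ₀ β ((t • graphMap v) ξ) = φ₀ (⟪v, ‖ξ‖⁻¹ • ξ⟫) • β (t • ξ) := by
  have hquot : t * ⟪v, ξ⟫ / ‖t • ξ‖ = ⟪v, ‖ξ‖⁻¹ • ξ⟫ := by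
    rw [norm_smul, Real.norm_of_nonneg ht.le, mul_div_mul_left _ _ ht.ne', real_inner_smul_right,
      div_eq_inv_mul]
  simp [angularCutoff, hquot]

end AngularCutoff

/-- The complex-valued symbol `β₀ = φ - φ(2 ⬝)` of the Littlewood–Paley operator `Λ_0`. -/
def dyadicSymbol {E : Type*} [AddCommGroup E] [Module ℝ E] (φ : E → ℝ) (ξ : E) : ℂ :=
  ((φ ξ - φ ((2 : ℝ) • ξ) : ℝ) : ℂ)

section DyadicSymbol

variable {E : Type*} [NormedAddCommGroup E] [NormedSpace ℝ E] {φ : E → ℝ}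

theorem contDiff_dyadicSymbol {n : WithTop ℕ∞} (hφ : ContDiff ℝ n φ) :
    ContDiff ℝ n (dyadicSymbol φ) :=
  Complex.ofRealCLM.contDiff.comp (hφ.sub (hφ.comp (contDiff_const_smul (2 : ℝ))))

theorem hasCompactSupport_dyadicSymbol (hφ : HasCompactSupport φ) :
    HasCompactSupport (dyadicSymbol φ) :=
  (hφ.sub (hφ.comp_smul two_ne_zero)).comp_left Complex.ofReal_zero

theorem eventually_dyadicSymbol_eq_zero (hφ : ∀ᶠ ξ in 𝓝 0, φ ξ = φ 0) :
    ∀ᶠ ξ in 𝓝 0, dyadicSymbol φ ξ = 0 := by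
  have hdil : Tendsto (fun ξ : E => (2 : ℝ) • ξ) (𝓝 0) (𝓝 0) := by
    simpa using (continuous_const_smul (2 : ℝ)).tendsto (0 : E)
  filter_upwards [hφ, hdil.eventually hφ] with ξ hξ h2ξ
  simp [dyadicSymbol, hξ, h2ξ]

end DyadicSymbol

theorem eLpNorm_one_LamM_le {φ mf : Eu d → ℝ} {k : ℤ} {f : 𝓢(Eu d, ℂ)} (hf : ∀ ξ,
      f ξ = (((φ ((2 : ℝ) ^ k • ξ) - φ ((2 : ℝ) ^ (k + 1) • ξ)) * mf ξ : ℝ) : ℂ))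
    {g : Eu d → ℂ} (hg : AEStronglyMeasurable g) :
    eLpNorm (LamM φ mf k g) 1 ≤ eLpNorm (𝓕⁻ (f : Eu d → ℂ)) 1 * eLpNorm g 1 := by
  have hconv : LamM φ mf k g = 𝓕⁻ (f : Eu d → ℂ) ⋆[mul ℂ ℂ] g := by
    ext x
    rw [convolution_mul_swap, LamM, ← funext hf]
  have hmul : ‖mul ℂ ℂ‖ₑ = 1 := by rw [← ofReal_norm, opNorm_mul, ENNReal.ofReal_one]
  rw [hconv]
  simpa only [hmul, one_mul] using
    eLpNorm_one_convolution_le (mul ℂ ℂ) (aestronglyMeasurable_fourierInv f) hg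

theorem dyadicSymbol_sub_angularCutoff (φ : Eu d → ℝ) (φ₀ : ℝ → ℝ) (r : ℝ) (ν : Eu d) (k : ℤ)
    (ξ : Eu d) :
    dyadicSymbol φ ((2 : ℝ) ^ k • ξ) -
        angularCutoff φ₀ (dyadicSymbol φ) (((2 : ℝ) ^ k • graphMap (r • ν)) ξ) =
      (((φ ((2 : ℝ) ^ k • ξ) - φ ((2 : ℝ) ^ (k + 1) • ξ)) * (1 - mDir φ₀ r ν ξ) : ℝ) : ℂ) := by
  rw [angularCutoff_smul_graphMap (by positivity), real_inner_smul_left, mDir, dyadicSymbol,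
    smul_smul, ← zpow_one_add₀ two_ne_zero, add_comm 1 k, Complex.real_smul]
  push_cast
  ring

theorem stmt_general (d : ℕ)
    (φ : Eu d → ℝ) (hφsm : ContDiff ℝ ∞ φ) (hφsupp : HasCompactSupport φ)
    (hφ0 : ∀ᶠ ξ in 𝓝 0, φ ξ = φ 0)
    (φ₀ : ℝ → ℝ) (hφ₀sm : ContDiff ℝ ∞ φ₀) (hφ₀supp : HasCompactSupport φ₀) :
    ∃ C : ℝ, 0 < C ∧ ∀ (r : ℝ) (ν : Eu d) (k : ℤ) (g : Eu d → ℂ), Integrable g →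
      eLpNorm (LamM φ (fun ξ => 1 - mDir φ₀ r ν ξ) k g) 1 volume
        ≤ ENNReal.ofReal C * eLpNorm g 1 volume := by
  have hβsm := contDiff_dyadicSymbol hφsm
  have hβsupp := hasCompactSupport_dyadicSymbol hφsupp
  have hβ0 := eventually_dyadicSymbol_eq_zero hφ0
  let β : 𝓢(Eu d, ℂ) := hβsupp.toSchwartzMap hβsm
  let Ψ : 𝓢(WithLp 2 (ℝ × Eu d), ℂ) :=
    (hasCompactSupport_angularCutoff hφ₀supp hβsupp hβ0.self_of_nhds).toSchwartzMap
      (contDiff_angularCutoff hφ₀sm hβsm hβ0)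
  obtain ⟨C₁, hC₁⟩ := exists_eLpNorm_one_fourierInv_comp_le (E := Eu d) β
  obtain ⟨C₂, hC₂⟩ := exists_eLpNorm_one_fourierInv_comp_le (E := Eu d) Ψ
  refine ⟨C₁ + C₂ + 1, by positivity, fun r ν k g hg => ?_⟩
  have ht : (2 : ℝ) ^ k ≠ 0 := by positivity
  have hT₁ : Injective ((2 : ℝ) ^ k • (LinearMap.id : Eu d →ₗ[ℝ] Eu d)) := smul_right_injective _ ht
  have hT₂ := injective_smul_graphMap ht (r • ν)
  let f := schwartzPullback β _ hT₁ - schwartzPullback Ψ _ hT₂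
  have hf : eLpNorm (𝓕⁻ (f : Eu d → ℂ)) 1 ≤ ENNReal.ofReal (C₁ + C₂ + 1) := by
    refine (eLpNorm_fourierInv_sub_le _ _ le_rfl).trans
      ((add_le_add (hC₁ _ hT₁) (hC₂ _ hT₂)).trans ?_)
    rw [← ENNReal.coe_add, ← ENNReal.ofReal_coe_nnreal, NNReal.coe_add]
    exact ENNReal.ofReal_le_ofReal (le_add_of_nonneg_right zero_le_one)
  exact (eLpNorm_one_LamM_le (dyadicSymbol_sub_angularCutoff φ φ₀ r ν k)
    hg.aestronglyMeasurable).trans (mul_le_mul_left hf _)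

theorem stmt (d : ℕ) (hd : 2 ≤ d)
    (φ : Eu d → ℝ) (hφsm : ContDiff ℝ (⊤ : ℕ∞) φ)
    (hφrad : ∀ x y : Eu d, ‖x‖ = ‖y‖ → φ x = φ y)
    (hφ1 : ∀ x : Eu d, ‖x‖ ≤ 1 → φ x = 1)
    (hφ0 : ∀ x : Eu d, 6/5 ≤ ‖x‖ → φ x = 0)
    (φ₀ : ℝ → ℝ) (hφ₀sm : ContDiff ℝ (⊤ : ℕ∞) φ₀)
    (hφ₀1 : ∀ u : ℝ, |u| < 1/2 → φ₀ u = 1)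
    (hφ₀0 : ∀ u : ℝ, 1 ≤ |u| → φ₀ u = 0)
    :
    ∃ C : ℝ, 0 < C ∧ ∀ n : ℕ, 1 ≤ n → ∀ ν : Eu d, ‖ν‖ = 1 → ∀ k : ℤ,
      ∀ g : Eu d → ℂ, Integrable g →
      eLpNorm (LamM φ (fun ξ =>
          1 - mDir φ₀ ((2:ℝ)^((n:ℝ)*gam) * (n:ℝ)^(-5 : ℤ)) ν ξ) k g) 1 volume
        ≤ ENNReal.ofReal C * eLpNorm g 1 volume := by
  have hφsupp : HasCompactSupport φ :=
    .intro (isCompact_closedBall 0 (6/5)) fun x hx =>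
      hφ0 x (le_of_not_ge fun h => hx (mem_closedBall_zero_iff.2 h))
  have hφ₀supp : HasCompactSupport φ₀ :=
    .intro (isCompact_closedBall 0 1) fun u hu =>
      hφ₀0 u (le_of_not_ge fun h => hu (mem_closedBall_zero_iff.2 h))
  have hφloc : ∀ᶠ ξ in 𝓝 0, φ ξ = φ 0 := by
    filter_upwards [closedBall_mem_nhds 0 one_pos] with ξ hξ
    rw [hφ1 ξ (by simpa using hξ), hφ1 0 (by simp)]
  obtain ⟨C, hC, h⟩ := stmt_general d φ hφsm hφsupp hφloc φ₀ hφ₀sm hφ₀supp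
  exact ⟨C, hC, fun n _ ν _ k g hg => h _ ν k g hg⟩
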